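/- arXiv:1812.09753 — 2 statements merged into one kernel-verified Lean document; each statement's English description precedes it below -/
import Mathlib

section
/- Let n ≥ 2 and let K ⊆ S^n be a compact spherically convex set whose interior in S^n is nonempty. Suppose that for every unit vector u ∈ ℝ^{n+1} the two-point symmetrization τ_H(K) with respect to u is spherically convex. Then K is a closed geodesic ball: there exist z ∈ S^n and r ∈ (0, π/2) with K = B(z,r). -/
/-!
Let `C` be the closed convex cone over `K`. Call a boundary point of `C` *touched* if some ball
inside `C` touches it; such a point has exactly one outer unit normal, and touched points are dense
in the boundary (`exists_touched_near`).

Let `x ≠ y` be touched unit vectors with normals `a` and `b`, and let `σ` be the reflection that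
swaps `x` and `y`. Near `x` the cone over the symmetrization is `C ∪ σ C`, a union of two bodies
with normals `a` and `σ b` at `x`. Convexity of the union forces `σ b = ± a`, and the minus sign
would leave `C` without interior. So `σ b = a` (`reflMap_normal`), that is, `a - b` is a
multiple of `x - y`. Three distinct points of a sphere are not collinear, so the factor `μ` is the
same for all pairs, and `a - μ x` is a constant vector `c`. Since `⟨a, x⟩ = 0`, all touched unit
vectors satisfy `⟨x, c⟩ = -μ` (`exists_hyperplane`).

By density the boundary of `C` lies in the boundary of one circular cone. The two sides of a
circular cone are connected and `C` contains no line, so `C` is the circular cone itself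
(`cone_eq`), and `K` is a geodesic ball of radius less than `π / 2`.
-/

open MeasureTheory

noncomputable section

/-- Euclidean space `ℝ^{n+1}`. -/
abbrev Esp (n : ℕ) : Type := EuclideanSpace ℝ (Fin (n + 1))

/-- The unit sphere `S^n ⊆ ℝ^{n+1}`, as a subtype. -/
abbrev Sph (n : ℕ) : Type := Metric.sphere (0 : Esp n) 1

/-- Geodesic distance `d(x,y) = arccos ⟨x,y⟩` on the sphere. -/
def gd {n : ℕ} (x y : Sph n) : ℝ :=
  Real.arccos (inner (𝕜 := ℝ) (x : Esp n) (y : Esp n))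

/-- Closed geodesic ball `B(z,r) = {x ∈ Sⁿ : d(x,z) ≤ r}`. -/
def sphBall {n : ℕ} (z : Sph n) (r : ℝ) : Set (Sph n) := {x | gd x z ≤ r}

/-- Geodesic diameter `diam X = sup {d(x,y) : x, y ∈ X}`. -/
def sphDiam {n : ℕ} (X : Set (Sph n)) : ℝ :=
  sSup {r | ∃ x ∈ X, ∃ y ∈ X, r = gd x y}

/-- Spherical volume: the `n`-dimensional (Hausdorff) surface measure on `S^n`. -/
def sphVol (n : ℕ) : Measure (Sph n) := μH[(n : ℝ)]

/-- `K ⊆ S^n` is spherically convex: it lies in an open hemisphere and the cone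
`{t • x : t ≥ 0, x ∈ K}` is convex in `ℝ^{n+1}`. -/
def SphConvex {n : ℕ} (K : Set (Sph n)) : Prop :=
  (∃ w : Esp n, w ≠ 0 ∧ ∀ x ∈ K, 0 < inner (𝕜 := ℝ) (x : Esp n) w) ∧
    Convex ℝ {p : Esp n | ∃ t : ℝ, 0 ≤ t ∧ ∃ x ∈ K, p = t • (x : Esp n)}

/-- Reflection of `ℝ^{n+1}` through the hyperplane orthogonal to `u`. -/
def reflMap {n : ℕ} (u : Esp n) (p : Esp n) : Esp n :=
  p - (2 * inner (𝕜 := ℝ) p u) • u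

/-- Two-point symmetrization of `X ⊆ S^n` with respect to the unit vector `u`:
`τ_H(X) = ((X ∪ σ_H(X)) ∩ H⁺) ∪ ((X ∩ σ_H(X)) ∩ H⁻)` where
`H⁺ = {⟨x,u⟩ ≥ 0}`, `H⁻ = {⟨x,u⟩ ≤ 0}` and `σ_H` is the reflection through `u^⊥`. -/
def twoPointSym {n : ℕ} (u : Esp n) (X : Set (Sph n)) : Set (Sph n) :=
  {x | (0 ≤ inner (𝕜 := ℝ) (x : Esp n) u ∧
          (x ∈ X ∨ reflMap u (x : Esp n) ∈ (((↑) '' X : Set (Esp n))))) ∨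
       (inner (𝕜 := ℝ) (x : Esp n) u ≤ 0 ∧
          (x ∈ X ∧ reflMap u (x : Esp n) ∈ (((↑) '' X : Set (Esp n)))))}

section Geometry

variable {n : ℕ}

/-! ### Reflections -/

lemma reflMap_involutive {u : Esp n} (hu : ‖u‖ = 1) (p : Esp n) :
    reflMap u (reflMap u p) = p := by
  have h : inner ℝ u u = (1 : ℝ) := by rw [real_inner_self_eq_norm_sq, hu]; norm_num
  unfold reflMap
  rw [inner_sub_left, real_inner_smul_left, h]
  module

lemma inner_reflMap_left (u p q : Esp n) :
    inner ℝ (reflMap u p) q = inner ℝ p (reflMap u q) := by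
  unfold reflMap
  rw [inner_sub_left, inner_sub_right, real_inner_smul_left, real_inner_smul_right,
    real_inner_comm q u]
  ring

lemma norm_reflMap {u : Esp n} (hu : ‖u‖ = 1) (p : Esp n) : ‖reflMap u p‖ = ‖p‖ := by
  have h : ‖reflMap u p‖ ^ 2 = ‖p‖ ^ 2 := by
    rw [← real_inner_self_eq_norm_sq, inner_reflMap_left, reflMap_involutive hu,
      real_inner_self_eq_norm_sq]
  exact (sq_eq_sq₀ (norm_nonneg _) (norm_nonneg _)).1 h

lemma reflMap_sub (u p q : Esp n) : reflMap u (p - q) = reflMap u p - reflMap u q := by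
  unfold reflMap
  rw [inner_sub_left]
  module

lemma reflMap_smul (u : Esp n) (t : ℝ) (p : Esp n) :
    reflMap u (t • p) = t • reflMap u p := by
  unfold reflMap
  rw [real_inner_smul_left]
  module

/-! ### Supporting normals and touched boundary points -/

lemma exists_unit_support {T : Set (Esp n)} (hT : Convex ℝ T) (hne : (interior T).Nonempty)
    {x : Esp n} (hx : x ∉ interior T) :
    ∃ g : Esp n, ‖g‖ = 1 ∧ ∀ q ∈ T, inner ℝ g q ≤ inner ℝ g x := by
  obtain ⟨f, hf⟩ := geometric_hahn_banach_open_point hT.interior isOpen_interior hx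
  set g := (InnerProductSpace.toDual ℝ (Esp n)).symm f with hg
  have hgf : ∀ q, inner ℝ g q = f q := fun q => by
    rw [hg]; exact InnerProductSpace.toDual_symm_apply
  have hg0 : g ≠ 0 := by
    rintro h0
    obtain ⟨p, hp⟩ := hne
    have := hf p hp
    rw [← hgf, ← hgf, h0] at this
    simp at this
  have hle : ∀ q ∈ T, inner ℝ g q ≤ inner ℝ g x := by
    intro q hq
    have hcl : q ∈ closure (interior T) := by
      rw [hT.closure_interior_eq_closure_of_nonempty_interior hne]
      exact subset_closure hq
    have hclosed : IsClosed {q : Esp n | inner ℝ g q ≤ inner ℝ g x} :=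
      isClosed_le (by fun_prop) (by fun_prop)
    refine closure_minimal (fun p hp => ?_) hclosed hcl
    have := hf p hp
    rw [← hgf, ← hgf] at this
    exact this.le
  have hn : 0 < ‖g‖ := norm_pos_iff.2 hg0
  refine ⟨‖g‖⁻¹ • g, ?_, fun q hq => ?_⟩
  · rw [norm_smul, norm_inv, norm_norm, inv_mul_cancel₀ hn.ne']
  · rw [real_inner_smul_left, real_inner_smul_left]
    exact mul_le_mul_of_nonneg_left (hle q hq) (by positivity)

/-- A set that contains a ball touching the point `x` from inside has at most one unit outer
normal at `x`. -/
lemma support_eq_of_ball {T : Set (Esp n)} {x a g : Esp n} {ρ : ℝ} (hρ : 0 < ρ)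
    (ha : ‖a‖ = 1) (hball : Metric.closedBall (x - ρ • a) ρ ⊆ T) (hg : ‖g‖ = 1)
    (hsup : ∀ q ∈ T, inner ℝ g q ≤ inner ℝ g x) : g = a := by
  -- the point of the ball that lies farthest in the direction `g`
  have hq := hsup (x - ρ • a + ρ • g) (hball (by
    rw [Metric.mem_closedBall, dist_eq_norm, add_sub_cancel_left, norm_smul, hg,
      Real.norm_of_nonneg hρ.le, mul_one]))
  rw [inner_add_right, inner_sub_right, real_inner_smul_right, real_inner_smul_right,
    real_inner_self_eq_norm_sq, hg] at hq
  have h1 : (1 : ℝ) ≤ inner ℝ g a := by nlinarith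
  have h2 : inner ℝ g a ≤ 1 := by
    have := real_inner_le_norm g a
    rwa [hg, ha, mul_one] at this
  exact (inner_eq_one_iff_of_norm_eq_one hg ha).1 (le_antisymm h2 h1)

/-- `b` is an outer unit normal of the cone `C` at `y`, and `C` contains a ball touching `y` from
inside; so `y` is a smooth boundary point of `C` with normal `b`. -/
def Touched (C : Set (Esp n)) (y b : Esp n) : Prop :=
  ‖b‖ = 1 ∧ inner ℝ b y = 0 ∧ (∀ q ∈ C, inner ℝ b q ≤ 0) ∧
    ∃ ρ : ℝ, 0 < ρ ∧ Metric.closedBall (y - ρ • b) ρ ⊆ C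

lemma Touched.mem {C : Set (Esp n)} {y b : Esp n} (h : Touched C y b) : y ∈ C := by
  obtain ⟨hb, -, -, ρ, hρ, hball⟩ := h
  apply hball
  rw [Metric.mem_closedBall, dist_eq_norm, sub_sub_cancel, norm_smul, hb,
    Real.norm_of_nonneg hρ.le, mul_one]

lemma Touched.smul {C : Set (Esp n)} (hC : ∀ t : ℝ, 0 < t → ∀ q ∈ C, t • q ∈ C)
    {y b : Esp n} (h : Touched C y b) {s : ℝ} (hs : 0 < s) : Touched C (s • y) b := by
  obtain ⟨hb, hy, hsup, ρ, hρ, hball⟩ := h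
  refine ⟨hb, by rw [real_inner_smul_right, hy, mul_zero], hsup, s * ρ, by positivity, ?_⟩
  intro q hq
  have h1 : s⁻¹ • q ∈ C := by
    apply hball
    rw [Metric.mem_closedBall, dist_eq_norm] at hq ⊢
    have h2 : q - (s • y - (s * ρ) • b) = s • (s⁻¹ • q - (y - ρ • b)) := by
      rw [smul_sub, smul_inv_smul₀ hs.ne', smul_sub, smul_smul]
    rw [h2, norm_smul, Real.norm_of_nonneg hs.le] at hq
    exact le_of_mul_le_mul_left hq hs
  have h3 := hC s hs _ h1
  rwa [smul_inv_smul₀ hs.ne'] at h3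

lemma closedBall_shrink {x a : Esp n} (ha : ‖a‖ = 1) {r ρ : ℝ} (hrρ : r ≤ ρ) :
    Metric.closedBall (x - r • a) r ⊆ Metric.closedBall (x - ρ • a) ρ := by
  apply Metric.closedBall_subset_closedBall'
  have h : x - r • a - (x - ρ • a) = (ρ - r) • a := by module
  rw [dist_eq_norm, h, norm_smul, ha, Real.norm_of_nonneg (by linarith)]
  linarith

/-! ### Reflections that swap two touched points -/

/-- If the symmetrization `T` of the cone `C` in the hyperplane that swaps the smooth boundary
points `x` and `y` is convex, then the reflection also swaps the outer normals at `x` and `y`. -/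
lemma reflMap_normal {C T : Set (Esp n)} {x y u a b : Esp n} (hu : ‖u‖ = 1)
    (hT : Convex ℝ T)
    (hTC : ∀ p, 0 < inner ℝ p u → (p ∈ T ↔ p ∈ C ∨ reflMap u p ∈ C))
    (hxu : 0 < inner ℝ x u) (hxy : reflMap u x = y)
    (ha : Touched C x a) (hb : Touched C y b) : reflMap u b = a := by
  have hxC := ha.mem
  have hyC := hb.mem
  obtain ⟨ha1, hax, hasup, ρ₁, hρ₁, hball₁⟩ := ha
  obtain ⟨hb1, hby, hbsup, ρ₂, hρ₂, hball₂⟩ := hb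
  set b' := reflMap u b with hb'
  have hb'1 : ‖b'‖ = 1 := by rw [hb', norm_reflMap hu, hb1]
  -- a common radius so small that both balls stay in the open half-space around `x`
  obtain ⟨r, hr, hr₁, hr₂, hr₃⟩ : ∃ r : ℝ, 0 < r ∧ r ≤ ρ₁ ∧ r ≤ ρ₂ ∧ 2 * r < inner ℝ x u := by
    refine ⟨min (min ρ₁ ρ₂) (inner ℝ x u / 4), by positivity, ?_, ?_, ?_⟩
    · exact (min_le_left _ _).trans (min_le_left _ _)
    · exact (min_le_left _ _).trans (min_le_right _ _)
    · have := min_le_right (min ρ₁ ρ₂) (inner ℝ x u / 4)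
      linarith
  have hpos : ∀ c : Esp n, ‖c‖ = 1 → ∀ q ∈ Metric.closedBall (x - r • c) r,
      0 < inner ℝ q u := by
    intro c hc q hq
    rw [Metric.mem_closedBall, dist_eq_norm] at hq
    have h1 : ‖x - q‖ ≤ 2 * r := by
      have h2 : x - q = r • c - (q - (x - r • c)) := by module
      rw [h2]
      refine (norm_sub_le _ _).trans ?_
      rw [norm_smul, hc, Real.norm_of_nonneg hr.le]
      linarith
    have h3 := real_inner_le_norm (x - q) u
    rw [hu, inner_sub_left] at h3
    linarith
  have hTa : Metric.closedBall (x - r • a) r ⊆ T := fun q hq =>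
    (hTC q (hpos a ha1 q hq)).2 (Or.inl (hball₁ (closedBall_shrink ha1 hr₁ hq)))
  have hTb : Metric.closedBall (x - r • b') r ⊆ T := fun q hq => by
    refine (hTC q (hpos b' hb'1 q hq)).2 (Or.inr (hball₂ (closedBall_shrink hb1 hr₂ ?_)))
    rw [Metric.mem_closedBall, dist_eq_norm] at hq ⊢
    have h1 : reflMap u (q - (x - r • b')) = reflMap u q - (y - r • b) := by
      rw [reflMap_sub, reflMap_sub, reflMap_smul, hxy, hb', reflMap_involutive hu]
    rwa [← h1, norm_reflMap hu]
  by_cases hx : x ∈ interior T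
  · -- only opposite normals could make `x` interior to the union, and they are impossible
    exfalso
    have hopp : b' = -a := by
      by_contra hne
      have hv : 0 < 1 + inner ℝ a b' := by
        have h0 : b' + a ≠ 0 := fun h => hne (eq_neg_of_add_eq_zero_left h)
        have h1 : 0 < ‖b' + a‖ ^ 2 := by positivity
        rw [norm_add_sq_real, hb'1, ha1, real_inner_comm] at h1
        linarith
      -- moving from `x` along `a + b'` leaves both `C` and its reflection, but not `T`
      have hmem : ∀ᶠ ε : ℝ in nhds 0,
          x + ε • (a + b') ∈ T ∧ 0 < inner ℝ (x + ε • (a + b')) u := by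
        have hc : Continuous fun ε : ℝ => x + ε • (a + b') := by fun_prop
        have h1 := hc.continuousAt (x := 0) |>.preimage_mem_nhds
          (t := T) (by simpa using mem_interior_iff_mem_nhds.1 hx)
        have hc2 : Continuous fun ε : ℝ => inner ℝ (x + ε • (a + b')) u := by fun_prop
        have h2 : ∀ᶠ ε : ℝ in nhds 0, 0 < inner ℝ (x + ε • (a + b')) u :=
          hc2.continuousAt.eventually (lt_mem_nhds (by simpa using hxu))
        filter_upwards [h1, h2] with ε h3 h4 using ⟨h3, h4⟩
      obtain ⟨ε, ⟨hε1, hε2⟩, hε⟩ : ∃ ε : ℝ,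
          (x + ε • (a + b') ∈ T ∧ 0 < inner ℝ (x + ε • (a + b')) u) ∧ 0 < ε :=
        ((hmem.filter_mono nhdsWithin_le_nhds).and
          (self_mem_nhdsWithin : Set.Ioi (0 : ℝ) ∈ nhdsWithin 0 (Set.Ioi 0))).exists
      rcases (hTC _ hε2).1 hε1 with h | h
      · have := hasup _ h
        rw [inner_add_right, hax, real_inner_smul_right, inner_add_right,
          real_inner_self_eq_norm_sq, ha1] at this
        nlinarith
      · have := hbsup _ h
        have hb'x : inner ℝ b' x = 0 := by rw [hb', inner_reflMap_left, hxy, hby]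
        rw [← inner_reflMap_left, ← hb', inner_add_right, hb'x, real_inner_smul_right,
          inner_add_right, real_inner_self_eq_norm_sq, hb'1, real_inner_comm] at this
        nlinarith
    -- opposite normals force `a ⊥ y`, so the reflection fixes `a` and `b = -a`
    have hay : inner ℝ a y = 0 := by
      have h1 := hasup y hyC
      have h2 := hbsup x hxC
      have h3 : inner ℝ b' y = inner ℝ b x := by
        rw [hb', inner_reflMap_left, ← hxy, reflMap_involutive hu]
      rw [hopp, inner_neg_left] at h3
      linarith
    have hau : inner ℝ a u = 0 := by
      rw [← hxy] at hay
      unfold reflMap at hay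
      rw [inner_sub_right, hax, real_inner_smul_right] at hay
      have : 2 * inner ℝ x u * inner ℝ a u = 0 := by linarith
      rcases mul_eq_zero.1 this with h | h
      · linarith
      · exact h
    have hba : b = -a := by
      have h1 : reflMap u b' = b := by rw [hb', reflMap_involutive hu]
      rw [← h1, hopp]
      unfold reflMap
      rw [inner_neg_left, hau]
      simp
    have h1 := hbsup (x - ρ₁ • a) (hball₁ (Metric.mem_closedBall_self hρ₁.le))
    rw [hba, inner_neg_left, inner_sub_right, hax, real_inner_smul_right,
      real_inner_self_eq_norm_sq, ha1] at h1
    linarith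
  · have hne : (interior T).Nonempty := by
      refine ⟨x - r • a, interior_mono hTa ?_⟩
      exact Metric.ball_subset_interior_closedBall (Metric.mem_ball_self hr)
    obtain ⟨g, hg, hsup⟩ := exists_unit_support hT hne hx
    rw [← support_eq_of_ball hr ha1 hTa hg hsup, ← support_eq_of_ball hr hb'1 hTb hg hsup]

/-! ### Touched points lie in a hyperplane -/

/-- Three distinct points of a sphere are not collinear. -/
lemma coeff_eq_of_sphere {x y z : Esp n} (hx : ‖x‖ = 1) (hy : ‖y‖ = 1) (hz : ‖z‖ = 1)
    (hxy : x ≠ y) (hyz : y ≠ z) (hxz : x ≠ z) {μ ν : ℝ}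
    (h : μ • (x - y) + ν • (y - z) = 0) : μ = 0 := by
  by_contra hμ
  set v := y - z with hv
  set t := -(μ⁻¹ * ν) with ht
  have hx' : x = y + t • v := by
    have h1 : μ⁻¹ • (μ • (x - y) + ν • v) = 0 := by rw [h, smul_zero]
    rw [smul_add, inv_smul_smul₀ hμ, smul_smul] at h1
    rw [ht, neg_smul, ← sub_eq_zero, ← h1]
    abel
  have hz' : z = y - v := by rw [hv]; abel
  have hv0 : 0 < ‖v‖ ^ 2 := by
    have : v ≠ 0 := sub_ne_zero.2 hyz
    positivity
  have e1 : ‖y + t • v‖ ^ 2 = 1 := by rw [← hx', hx]; norm_num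
  have e2 : ‖y - v‖ ^ 2 = 1 := by rw [← hz', hz]; norm_num
  rw [norm_add_sq_real, hy, real_inner_smul_right, norm_smul, mul_pow, Real.norm_eq_abs,
    sq_abs] at e1
  rw [norm_sub_sq_real, hy] at e2
  have e3 : t * (1 + t) * ‖v‖ ^ 2 = 0 := by
    have : 2 * inner ℝ y v = ‖v‖ ^ 2 := by linarith
    linear_combination e1 - t * this
  rcases mul_eq_zero.1 e3 with h4 | h4
  · rcases mul_eq_zero.1 h4 with h5 | h5
    · rw [h5] at hx'; exact hxy (by simpa using hx')
    · have h6 : t = -1 := by linarith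
      rw [h6] at hx'
      exact hxz (by rw [hx', hz']; module)
  · linarith

/-- If the differences of normals at smooth unit points (`S x a`: the point `x` has the unit
normal `a`) are always parallel to the differences of the points, then these points lie in a
hyperplane that cuts the open unit ball. -/
lemma exists_hyperplane {S : Esp n → Esp n → Prop}
    (hS : ∀ x a, S x a → ‖x‖ = 1 ∧ ‖a‖ = 1 ∧ inner ℝ a x = 0)
    (hpar : ∀ x a y b, S x a → S y b → x ≠ y → ∃ μ : ℝ, a - b = μ • (x - y)) :
    ∃ (c : Esp n) (l : ℝ), |l| < ‖c‖ ∧ ∀ x a, S x a → inner ℝ x c = l := by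
  by_cases h1 : ∃ y b, S y b
  · obtain ⟨y, b, hy⟩ := h1
    obtain ⟨hy1, hb1, hby⟩ := hS y b hy
    have hyy : inner ℝ y y = (1 : ℝ) := by rw [real_inner_self_eq_norm_sq, hy1]; norm_num
    by_cases h2 : ∃ z d, S z d ∧ z ≠ y
    · obtain ⟨z, d, hz, hzy⟩ := h2
      obtain ⟨hz1, hd1, hdz⟩ := hS z d hz
      obtain ⟨μ, hμ⟩ := hpar z d y b hz hy hzy
      refine ⟨b - μ • y, -μ, ?_, ?_⟩
      · have h3 : ‖b - μ • y‖ ^ 2 = 1 + μ ^ 2 := by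
          rw [norm_sub_sq_real, norm_smul, real_inner_smul_right, hby, hb1, hy1,
            Real.norm_eq_abs, mul_one, sq_abs]
          ring
        apply abs_lt_of_sq_lt_sq _ (norm_nonneg _)
        rw [h3]; linarith [neg_sq μ]
      · have main : ∀ x a, S x a → x ≠ y → a - b = μ • (x - y) → inner ℝ x (b - μ • y) = -μ := by
          intro x a hx hxy h
          obtain ⟨hx1, ha1, hax⟩ := hS x a hx
          have h3 : b - μ • y = a - μ • x := by
            have : b = a - μ • (x - y) := by rw [← h]; abel
            rw [this]; module
          rw [h3, inner_sub_right, real_inner_comm, hax, real_inner_smul_right,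
            real_inner_self_eq_norm_sq, hx1]
          ring
        intro x a hx
        obtain ⟨hx1, ha1, hax⟩ := hS x a hx
        by_cases hxy : x = y
        · rw [hxy, inner_sub_right, real_inner_comm, hby, real_inner_smul_right, hyy]
          ring
        by_cases hxz : x = z
        · rw [hxz]; exact main z d hz hzy hμ
        obtain ⟨ν, hν⟩ := hpar x a y b hx hy hxy
        obtain ⟨κ, hκ⟩ := hpar x a z d hx hz hxz
        have h4 : (μ - κ) • (z - y) + (ν - κ) • (y - x) = 0 := by
          have h5 : (a - d) + (d - b) - (a - b) = 0 := by abel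
          rw [hμ, hν, hκ] at h5
          rw [← h5]
          module
        have h6 := coeff_eq_of_sphere hz1 hy1 hx1 hzy (Ne.symm hxy) (Ne.symm hxz) h4
        have h7 : (ν - κ) • (y - x) = 0 := by rw [h6] at h4; simpa using h4
        have h8 : ν = κ := by
          rcases smul_eq_zero.1 h7 with h | h
          · linarith
          · exact absurd (sub_eq_zero.1 h).symm hxy
        apply main x a hx hxy
        rw [hν, h8]
        congr 1
        linarith
    · -- a single point: the hyperplane through the origin orthogonal to its normal
      refine ⟨b, 0, by rw [hb1]; simp, fun x a hx => ?_⟩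
      have : x = y := by by_contra h; exact h2 ⟨x, a, hx, h⟩
      rw [this, real_inner_comm, hby]
  · -- no points at all: any hyperplane will do
    refine ⟨EuclideanSpace.single 0 1, 0, by simp, fun x a hx => absurd ⟨x, a, hx⟩ h1⟩

/-- Touched points are dense in the boundary of a closed convex cone with interior: the point of
`closure Cᶜ` nearest to an interior point is touched. -/
lemma exists_touched_near {C : Set (Esp n)} (hC : Convex ℝ C) (hcl : IsClosed C)
    (hcone : ∀ t : ℝ, 0 < t → ∀ q ∈ C, t • q ∈ C) (h0 : (0 : Esp n) ∈ C)
    (hne : (interior C).Nonempty) {x : Esp n} (hx : x ∈ frontier C) {ε : ℝ} (hε : 0 < ε) :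
    ∃ y b, Touched C y b ∧ dist y x < ε := by
  have hxC : x ∈ closure (interior C) := by
    rw [hC.closure_interior_eq_closure_of_nonempty_interior hne]
    exact hx.1
  obtain ⟨p, hp, hpx⟩ := Metric.mem_closure_iff.1 hxC (ε / 2) (by positivity)
  have hxc : x ∈ closure Cᶜ := by rw [closure_compl]; exact hx.2
  obtain ⟨y, hy, hyp⟩ := isClosed_closure.exists_infDist_eq_dist ⟨x, hxc⟩ p
  have hdist : dist p y ≤ dist p x := hyp ▸ Metric.infDist_le_dist_of_mem hxc
  have hyint : y ∉ interior C := by rw [closure_compl] at hy; exact hy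
  have hρ : 0 < dist p y := dist_pos.2 (fun h => hyint (h ▸ hp))
  set ρ := dist p y with hρdef
  have hball : Metric.closedBall p ρ ⊆ C := by
    rw [← closure_ball p hρ.ne']
    refine closure_minimal (fun q hq => ?_) hcl
    by_contra hqC
    have h1 := Metric.infDist_le_dist_of_mem (x := p) (subset_closure (show q ∈ Cᶜ from hqC))
    rw [hyp, dist_comm] at h1
    exact absurd hq (not_lt.2 h1)
  set b := ρ⁻¹ • (y - p) with hb
  have hb1 : ‖b‖ = 1 := by
    rw [hb, norm_smul, ← dist_eq_norm, dist_comm, ← hρdef, norm_inv, Real.norm_of_nonneg hρ.le,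
      inv_mul_cancel₀ hρ.ne']
  have hyb : y - ρ • b = p := by rw [hb, smul_inv_smul₀ hρ.ne']; abel
  have hball' : Metric.closedBall (y - ρ • b) ρ ⊆ C := by rwa [hyb]
  obtain ⟨g, hg, hsup⟩ := exists_unit_support hC hne hyint
  have hgb := support_eq_of_ball hρ hb1 hball' hg hsup
  rw [hgb] at hsup
  have hyC : y ∈ C := hball (by rw [Metric.mem_closedBall, dist_comm])
  have hby : inner ℝ b y = 0 := by
    have h1 := hsup _ h0
    have h2 := hsup _ (hcone 2 two_pos y hyC)
    rw [inner_zero_right] at h1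
    rw [real_inner_smul_right] at h2
    linarith
  refine ⟨y, b, ⟨hb1, hby, fun q hq => hby ▸ hsup q hq, ρ, hρ, hball'⟩, ?_⟩
  have := dist_triangle y p x
  rw [dist_comm y p, ← hρdef] at this
  rw [dist_comm x p] at hpx
  linarith

/-! ### Recognizing a circular cone -/

lemma exists_orthogonal (hn : 1 ≤ n) (e : Esp n) : ∃ v : Esp n, v ≠ 0 ∧ inner ℝ v e = 0 := by
  have h : (ℝ ∙ e)ᗮ ≠ ⊥ := by
    intro h
    have h1 := Submodule.finrank_add_finrank_orthogonal (ℝ ∙ e)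
    rw [h, finrank_bot, finrank_euclideanSpace, Fintype.card_fin] at h1
    have h2 : Module.finrank ℝ (ℝ ∙ e) ≤ 1 := by
      simpa using finrank_span_le_card (R := ℝ) ({e} : Set (Esp n))
    omega
  obtain ⟨v, hv, hv0⟩ := Submodule.exists_mem_ne_zero_of_ne_bot h
  exact ⟨v, hv0, Submodule.mem_orthogonal_singleton_iff_inner_left.1 hv⟩

/-- A closed set with nonempty interior that contains no antipodal pair `v, -v` with `v ≠ 0`, and
whose boundary lies in the boundary of a circular cone, is that circular cone, and the cone is
strictly smaller than a half-space. Both the interior and the exterior of the circular cone are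
connected, so each of them lies in the set or misses it. -/
lemma cone_eq {C : Set (Esp n)} (hn : 1 ≤ n) (hcl : IsClosed C) (hne : (interior C).Nonempty)
    (hpt : ∀ v ∈ C, -v ∈ C → v = 0) {e : Esp n} {l : ℝ} (hl : 0 ≤ l) (hle : l < ‖e‖)
    (hfr : ∀ x ∈ frontier C, inner ℝ x e = l * ‖x‖) :
    0 < l ∧ C = {x | l * ‖x‖ ≤ inner ℝ x e} := by
  have hee : inner ℝ e e = ‖e‖ ^ 2 := real_inner_self_eq_norm_sq e
  have he : 0 < ‖e‖ := hl.trans_lt hle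
  have hgap : 0 < ‖e‖ ^ 2 - l * ‖e‖ := by nlinarith
  obtain ⟨v, hv0, hve⟩ := exists_orthogonal hn e
  have key : ∀ U : Set (Esp n), IsPreconnected U → (∀ x ∈ U, inner ℝ x e ≠ l * ‖x‖) →
      (U ∩ C).Nonempty → U ⊆ C := by
    intro U hU hUf hUC
    by_contra hsub
    obtain ⟨q, hq, hqC⟩ := Set.not_subset.1 hsub
    have hmemInt : ∀ x ∈ U, x ∈ C → x ∈ interior C := fun x hxU hxC => by
      by_contra hx
      exact hUf x hxU (hfr x ⟨subset_closure hxC, hx⟩)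
    obtain ⟨p, hp, hpC⟩ := hUC
    obtain ⟨x, -, hx, hx'⟩ := hU (interior C) Cᶜ isOpen_interior hcl.isOpen_compl
      (fun x hx => (em (x ∈ C)).imp (hmemInt x hx) id) ⟨p, hp, hmemInt p hp hpC⟩ ⟨q, hq, hqC⟩
    exact hx' (interior_subset hx)
  -- the exterior of the circular cone is star-shaped about `-e`
  have hstar : StarConvex ℝ (-e) {x : Esp n | inner ℝ x e < l * ‖x‖} := by
    intro x hx s t hs ht hst
    simp only [Set.mem_ofPred_eq] at hx ⊢
    have h1 : t * ‖x‖ - s * ‖e‖ ≤ ‖s • -e + t • x‖ := by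
      have := norm_sub_norm_le (t • x) (s • e)
      rw [norm_smul, norm_smul, Real.norm_of_nonneg hs, Real.norm_of_nonneg ht] at this
      have h2 : s • -e + t • x = t • x - s • e := by module
      rwa [h2]
    rw [inner_add_left, real_inner_smul_left, real_inner_smul_left, inner_neg_left, hee]
    have h3 := mul_le_mul_of_nonneg_left h1 hl
    rcases hs.eq_or_lt with h0 | h0
    · have : t = 1 := by linarith
      subst h0; subst this
      linarith
    · nlinarith [mul_pos h0 hgap]
  have hconv : Convex ℝ {x : Esp n | l * ‖x‖ < inner ℝ x e} := by
    intro x hx y hy s t hs ht hst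
    simp only [Set.mem_ofPred_eq] at hx hy ⊢
    have h1 := norm_add_le (s • x) (t • y)
    rw [norm_smul, norm_smul, Real.norm_of_nonneg hs, Real.norm_of_nonneg ht] at h1
    rw [inner_add_left, real_inner_smul_left, real_inner_smul_left]
    have h3 := mul_le_mul_of_nonneg_left h1 hl
    rcases hs.eq_or_lt with h0 | h0
    · have : t = 1 := by linarith
      subst h0; subst this
      linarith
    · nlinarith [mul_pos h0 (sub_pos.2 hx), mul_nonneg ht (sub_pos.2 hy).le]
  have hin : C ⊆ {x | l * ‖x‖ ≤ inner ℝ x e} := by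
    intro p hp
    by_contra hpn
    rw [Set.mem_ofPred_eq, not_le] at hpn
    have hneg : -e ∈ {x : Esp n | inner ℝ x e < l * ‖x‖} := by
      rw [Set.mem_ofPred_eq, inner_neg_left, hee, norm_neg]
      nlinarith [mul_nonneg hl he.le, pow_pos he 2]
    have hsub := key _ (hstar.isPathConnected hneg).isConnected.isPreconnected
      (fun x hx => ne_of_lt hx) ⟨p, hpn, hp⟩
    -- the exterior contains a whole line in its closure
    have hmem : ∀ w : Esp n, inner ℝ w e = 0 → w ∈ C := by
      intro w hw
      have hlim : Filter.Tendsto (fun δ : ℝ => w - δ • e) (nhdsWithin 0 (Set.Ioi 0)) (nhds w) := by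
        have hc : Continuous fun δ : ℝ => w - δ • e := by fun_prop
        have := (hc.tendsto 0).mono_left (nhdsWithin_le_nhds (s := Set.Ioi 0))
        simpa using this
      refine hcl.mem_of_tendsto hlim ?_
      filter_upwards [self_mem_nhdsWithin] with δ hδ
      apply hsub
      have hδ' : 0 < δ := hδ
      rw [Set.mem_ofPred_eq, inner_sub_left, hw, real_inner_smul_left, hee]
      have : 0 ≤ l * ‖w - δ • e‖ := by positivity
      nlinarith [mul_pos hδ' (pow_pos he 2)]
    exact hv0 (hpt v (hmem v hve) (hmem (-v) (by rw [inner_neg_left, hve, neg_zero])))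
  have hopen : {x | l * ‖x‖ < inner ℝ x e} ⊆ C := by
    apply key _ hconv.isPreconnected (fun x hx => (ne_of_lt hx).symm)
    obtain ⟨p, hp⟩ := hne
    -- moving an interior point slightly towards `e` makes the inequality strict
    have hc : Continuous fun δ : ℝ => p + δ • e := by fun_prop
    have h1 : ∀ᶠ δ : ℝ in nhds 0, p + δ • e ∈ C :=
      hc.continuousAt (x := 0) |>.preimage_mem_nhds
        (t := C) (by simpa using mem_interior_iff_mem_nhds.1 hp)
    obtain ⟨δ, hδC, hδ⟩ := ((h1.filter_mono nhdsWithin_le_nhds).and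
      (self_mem_nhdsWithin : Set.Ioi (0 : ℝ) ∈ nhdsWithin 0 (Set.Ioi 0))).exists
    have hδ' : 0 < δ := hδ
    refine ⟨p + δ • e, ?_, hδC⟩
    have h2 : l * ‖p‖ ≤ inner ℝ p e := hin (interior_subset hp)
    have h3 := mul_le_mul_of_nonneg_left (norm_add_le p (δ • e)) hl
    rw [norm_smul, Real.norm_of_nonneg hδ'.le] at h3
    rw [Set.mem_ofPred_eq, inner_add_left, real_inner_smul_left, hee]
    nlinarith [mul_pos hδ' hgap]
  have heq : C = {x | l * ‖x‖ ≤ inner ℝ x e} := by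
    refine hin.antisymm fun x hx => ?_
    have hx' : l * ‖x‖ ≤ inner ℝ x e := hx
    have hlim : Filter.Tendsto (fun δ : ℝ => x + δ • e) (nhdsWithin 0 (Set.Ioi 0)) (nhds x) := by
      have hc : Continuous fun δ : ℝ => x + δ • e := by fun_prop
      have := (hc.tendsto 0).mono_left (nhdsWithin_le_nhds (s := Set.Ioi 0))
      simpa using this
    refine hcl.mem_of_tendsto hlim ?_
    filter_upwards [self_mem_nhdsWithin] with δ hδ
    apply hopen
    have hδ' : 0 < δ := hδ
    have h3 := mul_le_mul_of_nonneg_left (norm_add_le x (δ • e)) hl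
    rw [norm_smul, Real.norm_of_nonneg hδ'.le] at h3
    rw [Set.mem_ofPred_eq, inner_add_left, real_inner_smul_left, hee]
    nlinarith [mul_pos hδ' hgap]
  refine ⟨?_, heq⟩
  by_contra hl0
  have hl0' : l = 0 := le_antisymm (not_lt.1 hl0) hl
  refine hv0 (hpt v ?_ ?_) <;> rw [heq, Set.mem_ofPred_eq, hl0']
  · rw [hve]; simp
  · rw [inner_neg_left, hve]; simp

/-! ### The cone over a subset of the sphere -/

/-- The cone `{t x : t ≥ 0, x ∈ K}` spanned by a subset of the sphere. -/
def coneOf (K : Set (Sph n)) : Set (Esp n) :=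
  {p : Esp n | ∃ t : ℝ, 0 ≤ t ∧ ∃ x ∈ K, p = t • (x : Esp n)}

lemma coneOf_smul_mem {K : Set (Sph n)} {t : ℝ} (ht : 0 ≤ t) {q : Esp n} (hq : q ∈ coneOf K) :
    t • q ∈ coneOf K := by
  obtain ⟨s, hs, x, hx, rfl⟩ := hq
  exact ⟨t * s, by positivity, x, hx, by rw [smul_smul]⟩

lemma smul_mem_coneOf {K : Set (Sph n)} {t : ℝ} (ht : 0 < t) {x : Sph n} :
    t • (x : Esp n) ∈ coneOf K ↔ x ∈ K := by
  constructor
  · rintro ⟨s, hs, y, hy, h⟩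
    have hx1 : ‖(x : Esp n)‖ = 1 := norm_eq_of_mem_sphere x
    have hy1 : ‖(y : Esp n)‖ = 1 := norm_eq_of_mem_sphere y
    have hn := congrArg norm h
    rw [norm_smul, norm_smul, hx1, hy1, Real.norm_of_nonneg ht.le, Real.norm_of_nonneg hs,
      mul_one, mul_one] at hn
    rw [← hn] at h
    have : x = y := Subtype.ext (smul_right_injective _ ht.ne' h)
    rwa [this]
  · exact fun hx => ⟨t, ht.le, x, hx, rfl⟩

lemma coe_mem_coneOf {K : Set (Sph n)} {x : Sph n} : (x : Esp n) ∈ coneOf K ↔ x ∈ K := by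
  have := smul_mem_coneOf (K := K) (x := x) one_pos
  rwa [one_smul] at this

lemma exists_smul_sphere {p : Esp n} (hp : p ≠ 0) : ∃ x : Sph n, p = ‖p‖ • (x : Esp n) := by
  have h : 0 < ‖p‖ := norm_pos_iff.2 hp
  refine ⟨⟨‖p‖⁻¹ • p, ?_⟩, ?_⟩
  · rw [mem_sphere_zero_iff_norm, norm_smul, norm_inv, norm_norm, inv_mul_cancel₀ h.ne']
  · rw [smul_inv_smul₀ h.ne']

lemma isClosed_coneOf {K : Set (Sph n)} (hK : IsCompact K) : IsClosed (coneOf K) := by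
  refine isClosed_of_closure_subset fun p hp => ?_
  -- near `p` the cone is contained in the compact image of a bounded part of it
  set f : ℝ × Sph n → Esp n := fun q => q.1 • (q.2 : Esp n) with hf
  have hcomp : IsCompact (f '' (Set.Icc 0 (‖p‖ + 1) ×ˢ K)) :=
    (isCompact_Icc.prod hK).image (by fun_prop)
  have hsub : coneOf K ∩ Metric.ball p 1 ⊆ f '' (Set.Icc 0 (‖p‖ + 1) ×ˢ K) := by
    rintro q ⟨⟨t, ht, x, hx, rfl⟩, hq⟩
    refine ⟨(t, x), ⟨⟨ht, ?_⟩, hx⟩, rfl⟩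
    have h1 : ‖t • (x : Esp n)‖ = t := by
      rw [norm_smul, norm_eq_of_mem_sphere, mul_one, Real.norm_of_nonneg ht]
    rw [Metric.mem_ball, dist_eq_norm] at hq
    have h2 := norm_sub_norm_le (t • (x : Esp n)) p
    rw [h1] at h2
    change t ≤ ‖p‖ + 1
    linarith
  have hp' : p ∈ closure (coneOf K ∩ Metric.ball p 1) :=
    Metric.isOpen_ball.closure_inter ⟨hp, Metric.mem_ball_self one_pos⟩
  obtain ⟨⟨t, x⟩, ⟨ht, hx⟩, rfl⟩ := closure_minimal hsub hcomp.isClosed hp'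
  exact ⟨t, ht.1, x, hx, rfl⟩

lemma interior_coneOf {K : Set (Sph n)} (hK : (interior K).Nonempty) :
    (interior (coneOf K)).Nonempty := by
  obtain ⟨x, hx⟩ := hK
  obtain ⟨U, hU, hUK⟩ := isOpen_induced_iff.1 (isOpen_interior (s := K))
  have hx1 : ‖(x : Esp n)‖ = 1 := norm_eq_of_mem_sphere x
  have hx0 : (x : Esp n) ≠ 0 := norm_pos_iff.1 (by rw [hx1]; exact one_pos)
  refine ⟨x, mem_interior_iff_mem_nhds.2 ?_⟩
  have hc : ContinuousAt (fun q : Esp n => ‖q‖⁻¹ • q) (x : Esp n) :=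
    (continuous_norm.continuousAt.inv₀ (norm_ne_zero_iff.2 hx0)).smul continuousAt_id
  have hxU : ‖(x : Esp n)‖⁻¹ • (x : Esp n) ∈ U := by
    rw [hx1, inv_one, one_smul]
    rw [← hUK] at hx
    exact hx
  filter_upwards [hc.preimage_mem_nhds (hU.mem_nhds hxU), isOpen_ne.mem_nhds hx0] with q hq hq0
  obtain ⟨y, hy⟩ := exists_smul_sphere hq0
  have hqn : 0 < ‖q‖ := norm_pos_iff.2 hq0
  have hyU : (y : Esp n) ∈ U := by
    have : ‖q‖⁻¹ • q = (y : Esp n) := by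
      conv_lhs => rw [hy, norm_smul, norm_norm, norm_eq_of_mem_sphere, mul_one]
      exact inv_smul_smul₀ hqn.ne' _
    rw [← this]; exact hq
  have hyK : y ∈ interior K := by rw [← hUK]; exact hyU
  rw [hy]
  exact (smul_mem_coneOf hqn).2 (interior_subset hyK)

/-- On the open half-space `⟨p, u⟩ > 0` the cone over the symmetrization is the union of the cone
and its reflection. -/
lemma mem_coneOf_twoPointSym {K : Set (Sph n)} {u : Esp n} (hu : ‖u‖ = 1) {p : Esp n}
    (hp : 0 < inner ℝ p u) :
    p ∈ coneOf (twoPointSym u K) ↔ p ∈ coneOf K ∨ reflMap u p ∈ coneOf K := by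
  have hp0 : p ≠ 0 := by rintro rfl; simp at hp
  have hpn : 0 < ‖p‖ := norm_pos_iff.2 hp0
  obtain ⟨x, hx⟩ := exists_smul_sphere hp0
  have hxu : 0 < inner ℝ (x : Esp n) u := by
    rw [hx, real_inner_smul_left] at hp
    exact pos_of_mul_pos_right hp hpn.le
  have hr : reflMap u (x : Esp n) ∈ Metric.sphere (0 : Esp n) 1 := by
    rw [mem_sphere_zero_iff_norm, norm_reflMap hu, norm_eq_of_mem_sphere]
  have h1 : p ∈ coneOf (twoPointSym u K) ↔ x ∈ twoPointSym u K := by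
    rw [hx]; exact smul_mem_coneOf hpn
  have h2 : p ∈ coneOf K ↔ x ∈ K := by
    rw [hx]; exact smul_mem_coneOf hpn
  have h3 : reflMap u p ∈ coneOf K ↔ (⟨reflMap u x, hr⟩ : Sph n) ∈ K := by
    rw [hx, reflMap_smul]; exact smul_mem_coneOf (x := ⟨reflMap u x, hr⟩) hpn
  have h4 : reflMap u (x : Esp n) ∈ ((↑) '' K : Set (Esp n)) ↔
      (⟨reflMap u x, hr⟩ : Sph n) ∈ K := by
    constructor
    · rintro ⟨y, hy, hyx⟩
      have : y = ⟨reflMap u x, hr⟩ := Subtype.ext hyx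
      rwa [← this]
    · exact fun h => ⟨_, h, rfl⟩
  rw [h1, h2, h3, ← h4]
  constructor
  · rintro (⟨-, h⟩ | ⟨h, -⟩)
    · exact h
    · linarith
  · exact fun h => Or.inl ⟨hxu.le, h⟩

end Geometry

/-- a compact spherically convex body all of whose two-point
symmetrizations are spherically convex is a closed geodesic ball. -/
theorem sphConvex_twoPointSym_is_ball (n : ℕ) (hn : 2 ≤ n) (K : Set (Sph n))
    (hKconv : SphConvex K) (hKcomp : IsCompact K) (hKint : (interior K).Nonempty)
    (hsym : ∀ u : Esp n, ‖u‖ = 1 → SphConvex (twoPointSym u K)) :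
    ∃ z : Sph n, ∃ r : ℝ, 0 < r ∧ r < Real.pi / 2 ∧ K = sphBall z r := by
  obtain ⟨⟨w, -, hw⟩, hCconv⟩ := hKconv
  change Convex ℝ (coneOf K) at hCconv
  have hCcl := isClosed_coneOf hKcomp
  have hCint := interior_coneOf hKint
  have hCcone : ∀ t : ℝ, 0 < t → ∀ q ∈ coneOf K, t • q ∈ coneOf K :=
    fun t ht q hq => coneOf_smul_mem ht.le hq
  have hC0 : (0 : Esp n) ∈ coneOf K := by
    obtain ⟨x, hx⟩ := hKint
    exact ⟨0, le_rfl, x, interior_subset hx, by rw [zero_smul]⟩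
  have hCw : ∀ v ∈ coneOf K, v ≠ 0 → 0 < inner ℝ v w := by
    rintro v ⟨t, ht, x, hx, rfl⟩ hv
    have ht' : 0 < t := lt_of_le_of_ne ht (fun h => hv (by rw [← h, zero_smul]))
    rw [real_inner_smul_left]
    exact mul_pos ht' (hw x hx)
  have hpt : ∀ v ∈ coneOf K, -v ∈ coneOf K → v = 0 := by
    intro v hv hv'
    by_contra h0
    have h1 := hCw v hv h0
    have h2 := hCw (-v) hv' (neg_ne_zero.2 h0)
    rw [inner_neg_left] at h2
    linarith
  obtain ⟨c, m, hmc, hc⟩ := exists_hyperplane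
    (S := fun x a : Esp n => ‖x‖ = 1 ∧ Touched (coneOf K) x a)
    (fun x a h => ⟨h.1, h.2.1, h.2.2.1⟩) (by
      rintro x a y b ⟨hx1, hx⟩ ⟨hy1, hy⟩ hxy
      have hd : 0 < ‖x - y‖ := norm_pos_iff.2 (sub_ne_zero.2 hxy)
      set u := ‖x - y‖⁻¹ • (x - y) with hu
      have hu1 : ‖u‖ = 1 := by
        rw [hu, norm_smul, norm_inv, norm_norm, inv_mul_cancel₀ hd.ne']
      have hsq : 2 * inner ℝ x (x - y) = ‖x - y‖ ^ 2 := by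
        rw [norm_sub_sq_real, inner_sub_right, real_inner_self_eq_norm_sq, hx1, hy1]
        ring
      have hxu : 2 * inner ℝ x u = ‖x - y‖ := by
        rw [hu, real_inner_smul_right]
        field_simp
        linarith
      have hrefl : reflMap u x = y := by
        unfold reflMap
        rw [hxu, hu, smul_inv_smul₀ hd.ne']
        abel
      have h := reflMap_normal hu1 (hsym u hu1).2
        (fun p hp => mem_coneOf_twoPointSym hu1 hp) (by linarith) hrefl hx hy
      refine ⟨-(2 * inner ℝ b u) * ‖x - y‖⁻¹, ?_⟩
      rw [← h, ← smul_smul, ← hu]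
      unfold reflMap
      module)
  have hfr : ∀ x ∈ frontier (coneOf K), inner ℝ x c = m * ‖x‖ := by
    have hclosed : IsClosed {x : Esp n | inner ℝ x c = m * ‖x‖} :=
      isClosed_eq (by fun_prop) (by fun_prop)
    intro x hx
    refine hclosed.closure_subset (Metric.mem_closure_iff.2 fun ε hε => ?_)
    obtain ⟨y, b, hy, hyx⟩ := exists_touched_near hCconv hCcl hCcone hC0 hCint hx hε
    refine ⟨y, ?_, by rwa [dist_comm]⟩
    by_cases hy0 : y = 0
    · simp [hy0]
    have hyn : 0 < ‖y‖ := norm_pos_iff.2 hy0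
    have h1 := hc (‖y‖⁻¹ • y) b
      ⟨by rw [norm_smul, norm_inv, norm_norm, inv_mul_cancel₀ hyn.ne'],
        hy.smul hCcone (by positivity)⟩
    rw [real_inner_smul_left] at h1
    rw [Set.mem_ofPred_eq, ← h1]
    field_simp
  -- orient the hyperplane so that its offset is nonnegative
  obtain ⟨e, l, hl, hle, hfr'⟩ : ∃ (e : Esp n) (l : ℝ), 0 ≤ l ∧ l < ‖e‖ ∧
      ∀ x ∈ frontier (coneOf K), inner ℝ x e = l * ‖x‖ := by
    rcases le_total 0 m with h | h
    · exact ⟨c, m, h, by rwa [abs_of_nonneg h] at hmc, hfr⟩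
    · refine ⟨-c, -m, by linarith, by rwa [abs_of_nonpos h, ← norm_neg c] at hmc, fun x hx => ?_⟩
      rw [inner_neg_right, hfr x hx]
      ring
  obtain ⟨hl0, hCeq⟩ := cone_eq (by omega) hCcl hCint hpt hl hle hfr'
  have hen : 0 < ‖e‖ := hl.trans_lt hle
  have he0 : e ≠ 0 := norm_pos_iff.1 hen
  obtain ⟨z, hz⟩ := exists_smul_sphere he0
  have hk0 : 0 < l / ‖e‖ := by positivity
  have hk1 : l / ‖e‖ < 1 := (div_lt_one hen).2 hle
  refine ⟨z, Real.arccos (l / ‖e‖), Real.arccos_pos.2 hk1, Real.arccos_lt_pi_div_two.2 hk0, ?_⟩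
  ext x
  have hx1 : ‖(x : Esp n)‖ = 1 := norm_eq_of_mem_sphere x
  have hz1 : ‖(z : Esp n)‖ = 1 := norm_eq_of_mem_sphere z
  have hxz := abs_real_inner_le_norm (x : Esp n) (z : Esp n)
  rw [hx1, hz1, mul_one, abs_le] at hxz
  have h1 : x ∈ K ↔ l / ‖e‖ ≤ inner ℝ (x : Esp n) z := by
    rw [← coe_mem_coneOf, hCeq, Set.mem_ofPred_eq, hx1, mul_one, div_le_iff₀ hen]
    have : inner ℝ (x : Esp n) e = inner ℝ (x : Esp n) z * ‖e‖ := by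
      conv_lhs => rw [hz, real_inner_smul_right, mul_comm]
    rw [this]
  rw [h1]
  change _ ↔ Real.arccos _ ≤ Real.arccos _
  exact (Real.strictAntiOn_arccos.le_iff_ge ⟨hxz.1, hxz.2⟩ ⟨by linarith, hk1.le⟩).symm
end
end

section
/- Let n ≥ 2, let π/2 < D < π, and let C ⊆ S^n be a D-maximal set. Then there exists a solid D-maximal set C₀ with C₀ ⊆ C. -/
/-!
The set `C₀ = closure (interior C)` works, because `C \ interior C` is null.

A point `x ∈ C` with `d(x,y) < D` for all `y ∈ C` is interior to `C`: by compactness a small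
neighbourhood of `x` can be added to `C` without exceeding diameter `D`, so by maximality it adds no
volume, and as `C` is closed and nonempty open sets have positive volume it is locally contained in
`C` (`mem_interior_of_gd_lt`). A point `x ∈ C` with `d(x,y) = D` for some `y ∈ C` is not a Lebesgue
density point of `C`: at each small scale `r` the ball of radius `r` about `x` contains a ball of
radius `c r` on which the distance to `y` exceeds `D` (`eventually_exists_closedBall`), and this
ball, disjoint from `C`, carries a fixed fraction of the volume (`exists_sphVol_closedBall_le`).
By the density theorem almost every point of `C` is a density point (`ae_tendsto_density`), so
almost every point of `C` is interior.

The Hausdorff measure on the sphere is finite by Lipschitz parametrisations, nonzero by projection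
to `ℝ^n`, and gives equal volume to balls of equal radius by reflection. Finiteness allows
Besicovitch's density theorem in the ambient space to be used.
-/

open MeasureTheory

noncomputable section

/-- A set `C ⊆ S^n` is `D`-maximal: compact, of geodesic diameter at most `D`, and of
maximal spherical volume among compact sets of diameter at most `D`. -/
def DMaximal (n : ℕ) (D : ℝ) (C : Set (Sph n)) : Prop :=
  IsCompact C ∧ sphDiam C ≤ D ∧
    sphVol n C =
      sSup {v | ∃ X : Set (Sph n), IsCompact X ∧ sphDiam X ≤ D ∧ v = sphVol n X}

/-- A nonempty compact set `C ⊆ S^n`, `C ≠ S^n`, is solid if it equals the closure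
of its interior (in the topology of `S^n`). -/
def Solid {n : ℕ} (C : Set (Sph n)) : Prop :=
  C.Nonempty ∧ IsCompact C ∧ C ≠ Set.univ ∧ C = closure (interior C)

/-- `x` is a strongly regular boundary point of `C`: `x ∈ ∂C` and there are `r > 0`
and `z ∈ C` with `B(z,r) ⊆ C` and `d(x,z) = r`. -/
def StronglyRegular {n : ℕ} (C : Set (Sph n)) (x : Sph n) : Prop :=
  x ∈ frontier C ∧ ∃ r > 0, ∃ z ∈ C, sphBall z r ⊆ C ∧ gd x z = r

open Filter Topology Metric

/-! ### Finiteness, positivity and homogeneity of the spherical volume -/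

/-- Radial projection to the unit sphere is Lipschitz outside the open unit ball. -/
lemma lipschitzOnWith_normalize (n : ℕ) :
    LipschitzOnWith 2 (fun a : Esp n => ‖a‖⁻¹ • a) {a | 1 ≤ ‖a‖} := by
  refine LipschitzOnWith.of_dist_le_mul ?_
  intro a ha b hb
  simp only [Set.mem_ofPred_eq] at ha hb
  have ha0 : 0 < ‖a‖ := by linarith
  have hb0 : 0 < ‖b‖ := by linarith
  have key : ‖a‖⁻¹ • a - ‖b‖⁻¹ • b = ‖a‖⁻¹ • (a - b) + (‖a‖⁻¹ - ‖b‖⁻¹) • b := by module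
  have h2 : ‖(‖a‖⁻¹ - ‖b‖⁻¹) • b‖ = ‖a‖⁻¹ * |‖b‖ - ‖a‖| := by
    have : ‖a‖⁻¹ - ‖b‖⁻¹ = ‖a‖⁻¹ * (‖b‖ - ‖a‖) * ‖b‖⁻¹ := by field_simp
    rw [norm_smul, Real.norm_eq_abs, this, abs_mul, abs_mul, abs_of_pos (inv_pos.2 ha0),
      abs_of_pos (inv_pos.2 hb0)]
    field_simp
  have h3 : |‖b‖ - ‖a‖| ≤ ‖a - b‖ := by
    rw [norm_sub_rev]; exact abs_norm_sub_norm_le b a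
  have h4 : ‖a‖⁻¹ ≤ 1 := inv_le_one_of_one_le₀ ha
  rw [dist_eq_norm, dist_eq_norm, key]
  calc _ ≤ ‖‖a‖⁻¹ • (a - b)‖ + ‖(‖a‖⁻¹ - ‖b‖⁻¹) • b‖ := norm_add_le _ _
    _ = ‖a‖⁻¹ * ‖a - b‖ + ‖a‖⁻¹ * |‖b‖ - ‖a‖| := by
      rw [h2, norm_smul, norm_inv, norm_norm]
    _ ≤ 1 * ‖a - b‖ + 1 * ‖a - b‖ := by gcongr
    _ = _ := by push_cast; ring

/-- The sphere has finite volume: it is covered by the radial projections of the `2(n+1)` faces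
of the cube `[-1,1]^{n+1}`, each a Lipschitz image of `[-1,1]^n`. -/
lemma sphVol_univ_lt_top (n : ℕ) : sphVol n Set.univ < ⊤ := by
  let F : Fin (n + 1) × Bool → (Fin n → ℝ) → Esp n := fun p w =>
    WithLp.toLp 2 (Fin.insertNth (α := fun _ => ℝ) p.1 (cond p.2 1 (-1)) w)
  have hF1 : ∀ p w, 1 ≤ ‖F p w‖ := by
    intro p w
    have h := PiLp.norm_apply_le (F p w) p.1
    have : (F p w) p.1 = cond p.2 1 (-1) := by simp [F]
    rw [this] at h
    cases hp : p.2 <;> simp [hp] at h <;> exact h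
  have hFL : ∀ p, LipschitzWith
      (((Fintype.card (Fin (n + 1)) : NNReal) ^ (1 / (2 : ENNReal)).toReal) * 1) (F p) := by
    intro p
    refine (PiLp.lipschitzWith_toLp 2 (fun _ : Fin (n + 1) => ℝ)).comp
      (g := fun w => Fin.insertNth (α := fun _ => ℝ) p.1 (cond p.2 1 (-1)) w) ?_
    refine LipschitzWith.of_dist_le_mul fun v w => ?_
    simp only [NNReal.coe_one, one_mul]
    refine (dist_pi_le_iff dist_nonneg).2 fun j => ?_
    refine Fin.succAboveCases p.1 ?_ (fun k => ?_) j
    · simp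
    · simpa using dist_le_pi_dist v w k
  have hsub : sphere (0 : Esp n) 1 ⊆
      ⋃ p, ((fun a : Esp n => ‖a‖⁻¹ • a) ∘ F p) '' Set.Icc (fun _ => -1) (fun _ => 1) := by
    intro z hz
    have hz1 : ‖z‖ = 1 := by simpa using hz
    obtain ⟨i, -, hi⟩ := Finset.exists_max_image Finset.univ (fun i => |z i|) Finset.univ_nonempty
    have hi0 : 0 < |z i| := by
      by_contra h
      have : z = 0 := by
        ext j
        have := hi j (Finset.mem_univ _)
        simpa using abs_nonpos_iff.1 (this.trans (not_lt.1 h))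
      rw [this] at hz1; simp at hz1
    refine Set.mem_iUnion.2 ⟨(i, decide (0 < z i)), fun k => |z i|⁻¹ * z (i.succAbove k), ?_, ?_⟩
    · have : ∀ k, |(|z i|⁻¹ * z (i.succAbove k))| ≤ 1 := by
        intro k
        rw [abs_mul, abs_inv, abs_abs, inv_mul_le_iff₀ hi0, mul_one]
        exact hi _ (Finset.mem_univ _)
      exact ⟨fun k => (abs_le.1 (this k)).1, fun k => (abs_le.1 (this k)).2⟩
    · have hFz : F (i, decide (0 < z i)) (fun k => |z i|⁻¹ * z (i.succAbove k))
          = |z i|⁻¹ • z := by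
        ext j
        refine Fin.succAboveCases i ?_ (fun k => ?_) j
        · rcases lt_trichotomy (z i) 0 with h | h | h
          · simp [F, h.not_gt, abs_of_neg h, h.ne, inv_neg]
          · simp [h] at hi0
          · simp [F, h, abs_of_pos h, h.ne']
        · simp [F]
      simp only [Function.comp, hFz, norm_smul, hz1, norm_inv, Real.norm_eq_abs, abs_abs, mul_one,
        inv_inv, smul_smul]
      rw [mul_inv_cancel₀ hi0.ne', one_smul]
  have himg : sphVol n Set.univ = μH[(n : ℝ)] (sphere (0 : Esp n) 1) := by
    have := (isometry_subtype_coe (s := sphere (0 : Esp n) 1)).hausdorffMeasure_image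
      (d := (n : ℝ)) (Or.inl n.cast_nonneg) Set.univ
    rw [Set.image_univ, Subtype.range_coe] at this
    exact this.symm
  rw [himg]
  refine (measure_mono hsub).trans_lt ((measure_iUnion_le _).trans_lt ?_)
  rw [tsum_fintype]
  refine ENNReal.sum_lt_top.2 fun p _ => ?_
  have hL := ((lipschitzOnWith_normalize n).comp ((hFL p).lipschitzOnWith
    (s := Set.Icc (fun _ => -1) (fun _ => 1))) (fun w _ => hF1 p w)).hausdorffMeasure_image_le
    (d := (n : ℝ)) n.cast_nonneg
  refine hL.trans_lt (ENNReal.mul_lt_top ?_ ?_)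
  · exact ENNReal.rpow_lt_top_of_nonneg n.cast_nonneg ENNReal.coe_ne_top
  · have h := hausdorffMeasure_pi_real (ι := Fin n)
    rw [Fintype.card_fin] at h
    rw [h]
    exact isCompact_Icc.measure_lt_top

instance instFiniteSphVol (n : ℕ) : IsFiniteMeasure (sphVol n) := ⟨sphVol_univ_lt_top n⟩

/-- The sphere has positive volume: its orthogonal projection to `ℝ^n` is Lipschitz and covers a
small cube. -/
lemma sphVol_univ_pos (n : ℕ) : 0 < sphVol n Set.univ := by
  let p : Sph n → (Fin n → ℝ) := fun z k => (z : Esp n) k.succ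
  have hp : LipschitzWith 1 p := by
    refine LipschitzWith.of_dist_le_mul fun v w => ?_
    simp only [NNReal.coe_one, one_mul]
    refine (dist_pi_le_iff dist_nonneg).2 fun j => ?_
    rw [Subtype.dist_eq, dist_eq_norm, dist_eq_norm]
    exact PiLp.norm_apply_le ((v : Esp n) - (w : Esp n)) j.succ
  have hn1 : (0 : ℝ) < 1 / (n + 1) := by positivity
  have hsub : ball (0 : Fin n → ℝ) (1 / (n + 1)) ⊆ p '' Set.univ := by
    intro w hw
    have hw1 : ∀ k, |w k| ≤ 1 / (n + 1) := fun k => by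
      have := (norm_le_pi_norm w k).trans (mem_ball_zero_iff.1 hw).le
      simpa using this
    have hsum : ∑ k, w k ^ 2 ≤ 1 := by
      calc ∑ k, w k ^ 2 ≤ ∑ k : Fin n, (1 / ((n : ℝ) + 1)) := by
            refine Finset.sum_le_sum fun k _ => ?_
            have h1 : 1 / ((n : ℝ) + 1) ≤ 1 := by
              rw [div_le_one (by positivity)]; linarith [(n.cast_nonneg : (0 : ℝ) ≤ n)]
            rw [← sq_abs]
            nlinarith [hw1 k, abs_nonneg (w k)]
        _ ≤ 1 := by
            simp only [Finset.sum_const, Finset.card_univ, Fintype.card_fin, nsmul_eq_mul]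
            rw [mul_one_div, div_le_one (by positivity)]; linarith
    have hz : WithLp.toLp 2 (Fin.cons (α := fun _ => ℝ) √(1 - ∑ k, w k ^ 2) w) ∈
        sphere (0 : Esp n) 1 := by
      rw [mem_sphere_zero_iff_norm, ← sq_eq_sq₀ (norm_nonneg _) zero_le_one,
        EuclideanSpace.norm_sq_eq, Fin.sum_univ_succ]
      simp [Real.sq_sqrt (sub_nonneg.2 hsum)]
    exact ⟨⟨_, hz⟩, trivial, by ext k; simp [p]⟩
  have h := hausdorffMeasure_pi_real (ι := Fin n)
  rw [Fintype.card_fin] at h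
  have h1 := hp.hausdorffMeasure_image_le (d := (n : ℝ)) n.cast_nonneg Set.univ
  rw [h] at h1
  have h2 : 0 < (volume : Measure (Fin n → ℝ)) (ball 0 (1 / (n + 1))) :=
    measure_ball_pos _ _ hn1
  have h3 := h2.trans_le ((measure_mono hsub).trans h1)
  simpa [sphVol] using h3

/-- Balls of equal radius have equal volume, since a reflection of `ℝ^{n+1}` exchanges their
centres. -/
lemma sphVol_closedBall_eq {n : ℕ} (x y : Sph n) (r : ℝ) :
    sphVol n (closedBall x r) = sphVol n (closedBall y r) := by
  let R := (ℝ ∙ ((x : Esp n) - y))ᗮ.reflection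
  have hR : R (x : Esp n) = y := Submodule.reflection_sub (by simp)
  have hm : ∀ z : Sph n, R z ∈ sphere (0 : Esp n) 1 := fun z => by simp
  let f : Sph n → Sph n := fun z => ⟨R z, hm z⟩
  have hf : Isometry f := Isometry.of_dist_eq fun a b => by
    simp [f, Subtype.dist_eq]
  have hfx : f x = y := Subtype.ext hR
  have hinv : ∀ z, f (f z) = z := fun z => Subtype.ext (by
    simp only [f]; exact Submodule.reflection_reflection _ _)
  have himg : f '' closedBall x r = closedBall y r := by
    ext z
    constructor
    · rintro ⟨w, hw, rfl⟩
      rw [mem_closedBall, ← hfx, hf.dist_eq]; exact hw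
    · intro hz
      refine ⟨f z, ?_, hinv z⟩
      rw [mem_closedBall, ← hf.dist_eq, hinv, hfx]; exact hz
  rw [← himg]
  exact (hf.hausdorffMeasure_image (Or.inl n.cast_nonneg) _).symm

lemma sphVol_closedBall_pos {n : ℕ} (x : Sph n) {r : ℝ} (hr : 0 < r) :
    0 < sphVol n (closedBall x r) := by
  rw [pos_iff_ne_zero]
  intro h0
  obtain ⟨t, -, ht⟩ := (isCompact_univ (X := Sph n)).elim_nhds_subcover
    (fun y => closedBall y r) (fun y _ => closedBall_mem_nhds y hr)
  have : sphVol n Set.univ = 0 := by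
    refine measure_mono_null ht ((measure_biUnion_null_iff t.countable_toSet).2 fun y _ => ?_)
    rw [sphVol_closedBall_eq y x, h0]
  exact (sphVol_univ_pos n).ne' this

lemma sphVol_isOpen_pos {n : ℕ} {U : Set (Sph n)} (hU : IsOpen U) (h0 : sphVol n U = 0) :
    U = ∅ := by
  by_contra h
  obtain ⟨x, hx⟩ := Set.nonempty_iff_ne_empty.2 h
  obtain ⟨r, hr, hs⟩ := nhds_basis_closedBall.mem_iff.1 (hU.mem_nhds hx)
  exact (sphVol_closedBall_pos x hr).ne' (measure_mono_null hs h0)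

/-- A ball of radius `r > 0` has at most `K` times the volume of any ball of radius `δ r`, where `K`
depends only on `δ`: a finite `δ/2`-net of the unit ball of `ℝ^{n+1}`, rescaled by `r`, yields a
cover by `K` balls of radius `δ r` centred on the sphere. -/
lemma exists_sphVol_closedBall_le (n : ℕ) {δ : ℝ} (hδ : 0 < δ) :
    ∃ K : ℕ, ∀ (x w : Sph n) (r : ℝ), 0 < r →
      sphVol n (closedBall x r) ≤ K * sphVol n (closedBall w (δ * r)) := by
  obtain ⟨t, -, ht⟩ := (isCompact_closedBall (0 : Esp n) 1).elim_nhds_subcover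
    (fun y => closedBall y (δ / 2)) (fun y _ => closedBall_mem_nhds y (half_pos hδ))
  refine ⟨t.card, fun x w r hr => ?_⟩
  let A : Esp n → Set (Sph n) := fun f => {z | dist (z : Esp n) (x + r • f) ≤ δ * r / 2}
  have hcov : closedBall x r ⊆ ⋃ f ∈ t, A f := by
    intro z hz
    have hz' : r⁻¹ • ((z : Esp n) - x) ∈ closedBall (0 : Esp n) 1 := by
      rw [mem_closedBall_zero_iff, norm_smul, norm_inv, Real.norm_eq_abs, abs_of_pos hr,
        inv_mul_le_iff₀ hr, mul_one, ← dist_eq_norm]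
      exact hz
    obtain ⟨f, hf, hzf⟩ := Set.mem_iUnion₂.1 (ht hz')
    refine Set.mem_iUnion₂.2 ⟨f, hf, ?_⟩
    have h1 : (z : Esp n) - (x + r • f) = r • (r⁻¹ • ((z : Esp n) - x) - f) := by
      rw [smul_sub, smul_smul, mul_inv_cancel₀ hr.ne', one_smul]; abel
    rw [mem_closedBall, dist_eq_norm] at hzf
    change dist (z : Esp n) (x + r • f) ≤ δ * r / 2
    rw [dist_eq_norm, h1, norm_smul, Real.norm_eq_abs, abs_of_pos hr]
    nlinarith
  have hA : ∀ f, sphVol n (A f) ≤ sphVol n (closedBall w (δ * r)) := by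
    intro f
    rcases (A f).eq_empty_or_nonempty with h | ⟨p, hp⟩
    · simp [h]
    · rw [sphVol_closedBall_eq w p]
      refine measure_mono fun z hz => ?_
      have hz' : dist (z : Esp n) (x + r • f) ≤ δ * r / 2 := hz
      have hp' : dist (p : Esp n) (x + r • f) ≤ δ * r / 2 := hp
      rw [mem_closedBall, Subtype.dist_eq]
      linarith [dist_triangle_right (z : Esp n) p (x + r • f)]
  calc sphVol n (closedBall x r) ≤ sphVol n (⋃ f ∈ t, A f) := measure_mono hcov
    _ ≤ ∑ f ∈ t, sphVol n (A f) := measure_biUnion_finset_le _ _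
    _ ≤ ∑ f ∈ t, sphVol n (closedBall w (δ * r)) := Finset.sum_le_sum fun f _ => hA f
    _ = _ := by simp

/-! ### Enlarging a set that is not maximal -/

lemma continuous_gd {n : ℕ} : Continuous fun p : Sph n × Sph n => gd p.1 p.2 := by
  unfold gd
  exact Real.continuous_arccos.comp (by fun_prop)

lemma gd_comm {n : ℕ} (x y : Sph n) : gd x y = gd y x := by
  unfold gd; rw [real_inner_comm]

lemma gd_self {n : ℕ} (x : Sph n) : gd x x = 0 := by
  unfold gd; rw [real_inner_self_eq_norm_sq]; simp

lemma sphDiam_le_iff {n : ℕ} {X : Set (Sph n)} {D : ℝ} (hD : 0 ≤ D) :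
    sphDiam X ≤ D ↔ ∀ x ∈ X, ∀ y ∈ X, gd x y ≤ D := by
  constructor
  · intro h x hx y hy
    refine le_trans (le_csSup (s := {r | ∃ x ∈ X, ∃ y ∈ X, r = gd x y}) ⟨Real.pi, ?_⟩
      ⟨x, hx, y, hy, rfl⟩) h
    rintro _ ⟨a, -, b, -, rfl⟩
    exact Real.arccos_le_pi _
  · intro h
    refine Real.sSup_le ?_ hD
    rintro _ ⟨x, hx, y, hy, rfl⟩
    exact h x hx y hy

/-- A point at distance less than `D` from all of a `D`-maximal set is interior to it: otherwise a
small neighbourhood of the point could be added to the set, increasing its volume. -/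
lemma mem_interior_of_gd_lt {n : ℕ} {D : ℝ} (hD : 0 < D) {C : Set (Sph n)} (hC : DMaximal n D C)
    {x : Sph n} (hx : ∀ y ∈ C, gd x y < D) : x ∈ interior C := by
  obtain ⟨hcomp, hdiam, hmax⟩ := hC
  rw [sphDiam_le_iff hD.le] at hdiam
  obtain ⟨U, V, hU, hV, hxU, hCV, hUV⟩ := generalized_tube_lemma (isCompact_singleton (x := x))
    (hcomp.insert x) (isOpen_lt continuous_gd continuous_const :
      IsOpen {p : Sph n × Sph n | gd p.1 p.2 < D})
    (by
      rintro ⟨a, b⟩ ⟨ha, hb⟩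
      obtain rfl : a = x := ha
      rcases hb with hb | hb
      · obtain rfl : b = a := hb
        change gd b b < D
        rw [gd_self]; exact hD
      · exact hx b hb)
  have hUVx : U ∩ V ∈ 𝓝 x := (hU.inter hV).mem_nhds ⟨hxU rfl, hCV (Set.mem_insert _ _)⟩
  obtain ⟨W, hW, hWs, hWc⟩ := local_compact_nhds hUVx
  have hlt : ∀ a ∈ W, ∀ b ∈ C ∪ W, gd a b < D := by
    intro a ha b hb
    refine hUV (a := (a, b)) ⟨(hWs ha).1, ?_⟩
    rcases hb with hb | hb
    · exact hCV (Set.mem_insert_of_mem _ hb)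
    · exact (hWs hb).2
  have hdiam' : sphDiam (C ∪ W) ≤ D := by
    rw [sphDiam_le_iff hD.le]
    rintro a (ha | ha) b hb
    · rcases hb with hb | hb
      · exact hdiam a ha b hb
      · rw [gd_comm]; exact (hlt b hb a (Or.inl ha)).le
    · exact (hlt a ha b hb).le
  have hle : sphVol n (C ∪ W) ≤ sphVol n C := by
    rw [hmax]; exact le_sSup ⟨C ∪ W, hcomp.union hWc, hdiam', rfl⟩
  have hdiff : sphVol n (W \ C) = 0 := by
    have h1 : sphVol n C + sphVol n (W \ C) = sphVol n (C ∪ W) := by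
      rw [← measure_union' disjoint_sdiff_self_right hcomp.measurableSet, Set.union_sdiff_self]
    rw [← h1] at hle
    have h2 : sphVol n C + sphVol n (W \ C) ≤ sphVol n C + 0 := by simpa using hle
    exact le_antisymm ((ENNReal.add_le_add_iff_left (measure_ne_top _ _)).1 h2) zero_le
  have hempty : interior W \ C = ∅ :=
    sphVol_isOpen_pos (isOpen_interior.sdiff hcomp.isClosed)
      (measure_mono_null (Set.sdiff_subset_sdiff_left interior_subset) hdiff)
  exact interior_maximal (Set.sdiff_eq_empty.1 hempty) isOpen_interior (mem_interior_iff_mem_nhds.2 hW)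

/-! ### Points at extremal distance are not density points -/

/-- If `d(x,y) = D`, then moving `x` away from `y` along the great circle through the two points
gives, at every small scale `r`, a ball of radius comparable to `r` inside the ball of radius `r`
about `x`, all of whose points have distance more than `D` from `y`. -/
lemma eventually_exists_closedBall {n : ℕ} {D : ℝ} (hD0 : 0 < D) (hD1 : D < Real.pi)
    {x y : Sph n} (hxy : gd x y = D) :
    ∀ᶠ r in 𝓝[>] (0 : ℝ), ∃ w : Sph n,
      closedBall w (Real.sin D / 8 * r) ⊆ closedBall x r ∩ {z | D < gd z y} := by
  have hs : 0 < Real.sin D := Real.sin_pos_of_pos_of_lt_pi hD0 hD1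
  have hxn : ‖(x : Esp n)‖ = 1 := by simp
  have hyn : ‖(y : Esp n)‖ = 1 := by simp
  have hin : inner ℝ (x : Esp n) (y : Esp n) = Real.cos D := by
    have hb := abs_le.1 (abs_real_inner_le_norm (x : Esp n) (y : Esp n))
    rw [hxn, hyn, mul_one] at hb
    rw [← hxy, gd, Real.cos_arccos hb.1 hb.2]
  -- `u` is the unit tangent vector at `x` pointing towards `y`.
  let u : Esp n := (Real.sin D)⁻¹ • ((y : Esp n) - Real.cos D • (x : Esp n))
  have hsc := Real.sin_sq_add_cos_sq D
  have hxx : inner ℝ (x : Esp n) (x : Esp n) = 1 := by rw [real_inner_self_eq_norm_sq, hxn]; norm_num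
  have hyy : inner ℝ (y : Esp n) (y : Esp n) = 1 := by rw [real_inner_self_eq_norm_sq, hyn]; norm_num
  have hin' : inner ℝ (y : Esp n) (x : Esp n) = Real.cos D := by rw [real_inner_comm, hin]
  have hxu : inner ℝ (x : Esp n) u = 0 := by
    simp only [u, inner_smul_right, inner_sub_right, hxx, hin]; ring
  have huy : inner ℝ u (y : Esp n) = Real.sin D := by
    simp only [u, inner_smul_left, inner_sub_left, hyy, hin, conj_trivial]
    field_simp; linarith
  have huu : inner ℝ u u = 1 := by
    have : inner ℝ u u =
        (Real.sin D)⁻¹ * (inner ℝ u (y : Esp n) - Real.cos D * inner ℝ u (x : Esp n)) := by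
      conv_lhs => rw [show u = (Real.sin D)⁻¹ • ((y : Esp n) - Real.cos D • (x : Esp n)) from rfl]
      rw [inner_smul_right, inner_sub_right, inner_smul_right]
    rw [this, huy, real_inner_comm, hxu]
    field_simp; ring
  have hder : ∀ᶠ θ in 𝓝 (0 : ℝ),
      |Real.cos (D + θ) - Real.cos D + θ * Real.sin D| ≤ Real.sin D / 2 * |θ| := by
    have h1 : HasDerivAt Real.cos (-Real.sin D) D := Real.hasDerivAt_cos D
    rw [hasDerivAt_iff_isLittleO_nhds_zero] at h1
    filter_upwards [h1.def (half_pos hs)] with θ hθ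
    simpa using hθ
  have hder' : ∀ᶠ r in 𝓝[>] (0 : ℝ),
      |Real.cos (D + r / 2) - Real.cos D + r / 2 * Real.sin D| ≤ Real.sin D / 2 * |r / 2| := by
    have ht : Tendsto (fun r : ℝ => r / 2) (𝓝[>] 0) (𝓝 0) := by
      have : Tendsto (fun r : ℝ => r / 2) (𝓝 0) (𝓝 (0 / 2)) := by
        exact (continuous_id.div_const 2).tendsto 0
      rw [zero_div] at this
      exact this.mono_left nhdsWithin_le_nhds
    exact ht.eventually hder
  filter_upwards [hder', self_mem_nhdsWithin] with r hr hr0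
  have hr0 : 0 < r := hr0
  set θ := r / 2 with hθ
  have hθ0 : 0 < θ := by positivity
  have hsc' := Real.sin_sq_add_cos_sq θ
  let w : Esp n := Real.cos θ • (x : Esp n) - Real.sin θ • u
  have hwn : ‖w‖ = 1 := by
    have : ‖w‖ ^ 2 = 1 := by
      rw [← real_inner_self_eq_norm_sq]
      simp only [w, inner_sub_left, inner_sub_right, inner_smul_left, inner_smul_right, hxx, hxu,
        real_inner_comm (x : Esp n) u, huu, conj_trivial]
      linarith
    exact (pow_eq_one_iff_of_nonneg (norm_nonneg w) two_ne_zero).1 this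
  have hwy : inner ℝ w (y : Esp n) = Real.cos (D + θ) := by
    simp only [w, inner_sub_left, inner_smul_left, hin, huy, conj_trivial, Real.cos_add]; ring
  have hwx : ‖w - x‖ ≤ θ := by
    have h1 : inner ℝ w (x : Esp n) = Real.cos θ := by
      simp only [w, inner_sub_left, inner_smul_left, hxx, real_inner_comm (x : Esp n) u, hxu,
        conj_trivial]; ring
    have h2 : ‖w - x‖ ^ 2 ≤ θ ^ 2 := by
      rw [norm_sub_sq_real, h1, hwn, hxn]
      linarith [Real.one_sub_sq_div_two_le_cos (x := θ)]
    exact (sq_le_sq₀ (norm_nonneg _) hθ0.le).1 h2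
  refine ⟨⟨w, by simp [hwn]⟩, fun z hz => ?_⟩
  have hzw : ‖(z : Esp n) - w‖ ≤ Real.sin D / 8 * r := by
    rw [← dist_eq_norm]; exact hz
  refine ⟨?_, ?_⟩
  · rw [mem_closedBall, Subtype.dist_eq]
    have h1 : dist (z : Esp n) x ≤ dist (z : Esp n) w + dist w x := dist_triangle _ _ _
    rw [dist_eq_norm (z : Esp n) w, dist_eq_norm w] at h1
    nlinarith [Real.sin_le_one D]
  · have h1 : inner ℝ (z : Esp n) (y : Esp n) < Real.cos D := by
      have h2 : inner ℝ ((z : Esp n) - w) (y : Esp n) ≤ Real.sin D / 8 * r := by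
        have := real_inner_le_norm ((z : Esp n) - w) (y : Esp n)
        rw [hyn, mul_one] at this
        exact this.trans hzw
      rw [inner_sub_left, hwy] at h2
      rw [abs_of_pos hθ0] at hr
      have h3 := (abs_le.1 hr).2
      have : 0 < Real.sin D * r := by positivity
      rw [hθ] at h3
      linarith
    change D < Real.arccos _
    by_contra hcon
    have := Real.cos_le_cos_of_nonneg_of_le_pi (Real.arccos_nonneg _) hD1.le (not_lt.1 hcon)
    have hb := abs_le.1 (abs_real_inner_le_norm (z : Esp n) (y : Esp n))
    rw [hyn, mul_one, show ‖(z : Esp n)‖ = 1 by simp] at hb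
    rw [Real.cos_arccos hb.1 hb.2] at this
    linarith

/-- A point of `C` realising the distance bound `D` is not a Lebesgue density point of `C`. -/
lemma not_tendsto_density {n : ℕ} {D : ℝ} (hD0 : 0 < D) (hD1 : D < Real.pi)
    {C : Set (Sph n)} (hC : IsCompact C) {x y : Sph n} (hxy : gd x y = D)
    (hCy : ∀ z ∈ C, gd z y ≤ D) :
    ¬ Tendsto (fun r => sphVol n (C ∩ closedBall x r) / sphVol n (closedBall x r))
      (𝓝[>] 0) (𝓝 1) := by
  intro hT
  have hs : 0 < Real.sin D := Real.sin_pos_of_pos_of_lt_pi hD0 hD1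
  obtain ⟨K, hK⟩ := exists_sphVol_closedBall_le n (δ := Real.sin D / 8) (by positivity)
  have hT' := (ENNReal.tendsto_toReal ENNReal.one_ne_top).comp hT
  have hbound : ∀ᶠ r in 𝓝[>] (0 : ℝ),
      K * (sphVol n (C ∩ closedBall x r) / sphVol n (closedBall x r)).toReal ≤ K - 1 := by
    filter_upwards [eventually_exists_closedBall hD0 hD1 hxy, self_mem_nhdsWithin] with r hr hr0
    have hr0 : 0 < r := hr0
    obtain ⟨w, hw⟩ := hr
    have hsub : closedBall w (Real.sin D / 8 * r) ⊆ closedBall x r \ C := fun z hz =>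
      ⟨(hw hz).1, fun hzC => (hCy z hzC).not_gt (hw hz).2⟩
    have h1 : sphVol n (closedBall x r) ≤ K * sphVol n (closedBall x r \ C) :=
      (hK x w r hr0).trans (by gcongr)
    have h2 : sphVol n (closedBall x r ∩ C) + sphVol n (closedBall x r \ C)
      = sphVol n (closedBall x r) := measure_inter_add_sdiff _ hC.measurableSet
    have h1' := ENNReal.toReal_mono (by finiteness) h1
    have h2' := congrArg ENNReal.toReal h2
    rw [ENNReal.toReal_add (by finiteness) (by finiteness)] at h2'
    rw [ENNReal.toReal_mul, ENNReal.toReal_natCast] at h1'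
    have h3 : 0 < (sphVol n (closedBall x r)).toReal :=
      ENNReal.toReal_pos (sphVol_closedBall_pos x hr0).ne' (by finiteness)
    rw [Set.inter_comm, ENNReal.toReal_div, mul_div_assoc', div_le_iff₀ h3]
    rw [← h2'] at h1' ⊢
    nlinarith
  have := le_of_tendsto (hT'.const_mul (K : ℝ)) hbound
  simp at this
  linarith

/-- Lebesgue's density theorem on the sphere, transported from Besicovitch's theorem in the ambient
space `ℝ^{n+1}`. -/
lemma ae_tendsto_density {n : ℕ} {C : Set (Sph n)} (hC : IsCompact C) :
    ∀ᵐ x ∂(sphVol n).restrict C,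
      Tendsto (fun r => sphVol n (C ∩ closedBall x r) / sphVol n (closedBall x r))
        (𝓝[>] 0) (𝓝 1) := by
  have hemb : MeasurableEmbedding ((↑) : Sph n → Esp n) :=
    MeasurableEmbedding.subtype_coe isClosed_sphere.measurableSet
  have hpre : ((↑) : Sph n → Esp n) ⁻¹' (((↑) : Sph n → Esp n) '' C) = C :=
    Set.preimage_image_eq _ Subtype.coe_injective
  have h := Besicovitch.ae_tendsto_measure_inter_div
    ((sphVol n).map ((↑) : Sph n → Esp n)) (((↑) : Sph n → Esp n) '' C)
  rw [Measure.restrict_map hemb.measurable (hemb.measurableSet_image.2 hC.measurableSet), hpre] at h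
  filter_upwards [ae_of_ae_map hemb.measurable.aemeasurable h] with x hx
  have hball : ∀ r, ((↑) : Sph n → Esp n) ⁻¹' closedBall (x : Esp n) r = closedBall x r := by
    intro r; ext z; simp [Subtype.dist_eq]
  simpa only [hemb.map_apply, Set.preimage_inter, hpre, hball] using hx

/-- every `D`-maximal set with `π/2 < D < π` contains a solid `D`-maximal set. -/
theorem DMaximal_contains_solid (n : ℕ) (hn : 2 ≤ n) (D : ℝ)
    (hD0 : Real.pi / 2 < D) (hD1 : D < Real.pi) (C : Set (Sph n))
    (hC : DMaximal n D C) :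
    ∃ C₀ : Set (Sph n), C₀ ⊆ C ∧ Solid C₀ ∧ DMaximal n D C₀ := by
  have hD : 0 < D := by linarith [Real.pi_pos]
  have hdiam := (sphDiam_le_iff hD.le).1 hC.2.1
  have hsub : closure (interior C) ⊆ C :=
    closure_minimal interior_subset hC.1.isClosed
  have hnull : sphVol n (C \ interior C) = 0 := by
    have h : ∀ᵐ x ∂(sphVol n).restrict C, x ∈ interior C := by
      filter_upwards [ae_tendsto_density hC.1, ae_restrict_mem hC.1.measurableSet] with x hx hxC
      refine mem_interior_of_gd_lt hD hC fun y hy => lt_of_le_of_ne (hdiam x hxC y hy) fun hxy => ?_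
      exact not_tendsto_density hD hD1 hC.1 hxy (fun z hz => hdiam z hz y hy) hx
    rw [ae_restrict_iff' hC.1.measurableSet] at h
    refine measure_mono_null ?_ h
    rintro x ⟨hxC, hx⟩ hx'
    exact hx (hx' hxC)
  have hvol : sphVol n (closure (interior C)) = sphVol n C := by
    refine le_antisymm (measure_mono hsub) ?_
    calc sphVol n C ≤ sphVol n (interior C ∪ C \ interior C) := by
          rw [Set.union_sdiff_cancel interior_subset]
      _ ≤ sphVol n (interior C) + sphVol n (C \ interior C) := measure_union_le _ _
      _ ≤ _ := by rw [hnull, add_zero]; exact measure_mono subset_closure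
  have hcomp : IsCompact (closure (interior C)) := isClosed_closure.isCompact
  let e : Sph n := ⟨EuclideanSpace.single 0 1, by simp⟩
  have hmax : DMaximal n D (closure (interior C)) :=
    ⟨hcomp, (sphDiam_le_iff hD.le).2 fun x hx y hy => hdiam x (hsub hx) y (hsub hy),
      hvol.trans hC.2.2⟩
  refine ⟨closure (interior C), hsub, ⟨?_, hcomp, ?_, ?_⟩, hmax⟩
  · by_contra hne
    -- The empty set is not `D`-maximal, since a neighbourhood of any point may be added to it.
    rw [Set.not_nonempty_iff_eq_empty] at hne
    rw [hne] at hmax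
    simpa using mem_interior_of_gd_lt hD hmax (x := e) (by simp)
  · intro huniv
    have h := hdiam e (hsub (huniv ▸ trivial)) (-e) (hsub (huniv ▸ trivial))
    have : gd e (-e) = Real.pi := by
      rw [gd, show ((-e : Sph n) : Esp n) = -(e : Esp n) from rfl, inner_neg_right,
        real_inner_self_eq_norm_sq]
      simp
    linarith
  · exact subset_antisymm
      (closure_mono (interior_maximal subset_closure isOpen_interior))
      (closure_minimal interior_subset isClosed_closure)
end
end
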